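/- Let k ≥ 1 and let g : ℝ → ℝ be continuous on (0, ∞). Suppose that for every R > 0 the spherical integral ∫_{v ∈ S^k(R)} g(‖x − v‖) dμH[k](v) is independent of x inside the sphere, i.e. for all x₁, x₂ ∈ E with ‖x₁‖ < R and ‖x₂‖ < R, ∫_{v ∈ S^k(R)} g(‖x₁ − v‖) dμH[k](v) = ∫_{v ∈ S^k(R)} g(‖x₂ − v‖) dμH[k](v). Then the function x ↦ g(‖x‖) is harmonic on E \ {0} (its Laplacian vanishes there). -/

import Mathlib

open MeasureTheory

/-- The Laplacian of `f : ℝ^n → ℝ` at `x`: the sum of the pure second directional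
derivatives of `f` at `x` along the standard orthonormal basis vectors. -/
noncomputable def euclideanLaplacian {n : ℕ}
    (f : EuclideanSpace ℝ (Fin n) → ℝ) (x : EuclideanSpace ℝ (Fin n)) : ℝ :=
  ∑ i : Fin n, iteratedFDeriv ℝ 2 f x
    ![EuclideanSpace.single i (1 : ℝ), EuclideanSpace.single i (1 : ℝ)]

lemma aux_phi (k : ℕ) (hk : 1 ≤ k) : ∃ φ : ℝ → ℝ, ContDiffOn ℝ 2 φ (Set.Ioi 0) ∧
    ∀ s : ℝ, 0 < s → HasDerivAt φ (s ^ (-((k:ℝ)+1)/2)) s := by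
  rcases hk.eq_or_lt with h | h
  · subst h
    refine ⟨Real.log, fun s hs => (Real.contDiffAt_log.2 (ne_of_gt hs)).contDiffWithinAt, ?_⟩
    intro s hs
    convert Real.hasDerivAt_log hs.ne' using 1
    rw [← Real.rpow_neg_one]; norm_num
  · have hk' : (1:ℝ) < k := by exact_mod_cast h
    refine ⟨fun s => s ^ ((1-(k:ℝ))/2) / ((1-(k:ℝ))/2), ?_, ?_⟩
    · intro s hs
      exact ((Real.contDiffAt_rpow_const_of_ne (ne_of_gt hs)).div_const _).contDiffWithinAt
    · intro s hs
      refine ((Real.hasDerivAt_rpow_const (p := (1-(k:ℝ))/2) (Or.inl hs.ne')).div_const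
        ((1-(k:ℝ))/2)).congr_deriv ?_
      have : (1-(k:ℝ))/2 ≠ 0 := by
        apply ne_of_lt; linarith
      rw [mul_comm, mul_div_assoc, div_self this, mul_one]
      congr 1; ring

lemma aux_taylor (q q' : ℝ → ℝ) (s B : ℝ)
    (h1 : ∀ᶠ u in nhds s, HasDerivAt q (q' u) u) (h2 : HasDerivAt q' B s) (δ : ℝ) (hδ : 0 < δ) :
    ∃ η > 0, ∀ h : ℝ, |h| < η → q (s + h) ≤ q s + q' s * h + B / 2 * h ^ 2 + δ * h ^ 2 := by
  have h3 := (hasDerivAt_iff_isLittleO.1 h2).def hδ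
  obtain ⟨η, hη, H⟩ := Metric.eventually_nhds_iff_ball.1 (h1.and h3)
  refine ⟨η, hη, fun h hh => ?_⟩
  have key := Convex.norm_image_sub_le_of_norm_hasDerivWithin_le
    (f := fun u => q u - q' s * (u - s) - B / 2 * (u - s) ^ 2)
    (f' := fun u => q' u - q' s - B * (u - s)) (s := Set.uIcc s (s + h)) (x := s) (y := s + h)
    (C := δ * |h|) ?_ ?_ (convex_uIcc _ _) Set.left_mem_uIcc Set.right_mem_uIcc
  · simp only [Real.norm_eq_abs] at key
    have := (abs_le.1 key).2
    have e : δ * |h| * |s + h - s| = δ * h ^ 2 := by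
      rw [add_sub_cancel_left, mul_assoc, abs_mul_abs_self]; ring
    rw [e] at this
    ring_nf at this ⊢
    linarith
  · intro u hu
    have hu' : |u - s| ≤ |h| := by
      have := Set.abs_sub_left_of_mem_uIcc hu
      simpa using this
    have := (H u (by rw [Metric.mem_ball, Real.dist_eq]; linarith)).1
    have d2 : HasDerivAt (fun u => u - s) 1 u := (hasDerivAt_id u).sub_const s
    have := (this.sub (d2.const_mul (q' s))).sub ((d2.pow 2).const_mul (B/2))
    refine HasDerivAt.hasDerivWithinAt ?_
    refine HasDerivAt.congr_deriv this ?_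
    push_cast; ring
  · intro u hu
    have hu' : |u - s| ≤ |h| := by
      have := Set.abs_sub_left_of_mem_uIcc hu
      simpa using this
    have := (H u (by rw [Metric.mem_ball, Real.dist_eq]; linarith)).2
    simp only [Real.norm_eq_abs, smul_eq_mul] at this ⊢
    rw [mul_comm B]
    exact this.trans (by gcongr)

lemma aux_point {n : ℕ} (hn : 0 < n) (q q' : ℝ → ℝ) (R B : ℝ) (hR : 0 < R)
    (h1 : ∀ᶠ u in nhds (R^2), HasDerivAt q (q' u) u) (h2 : HasDerivAt q' B (R^2))
    (hL : 2 * n * q' (R^2) + 4 * R^2 * B < 0) :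
    ∃ t0 > 0, ∀ t, 0 < t → t < t0 → ∀ v : EuclideanSpace ℝ (Fin n), ‖v‖ = R →
      ∑ i, (q (R^2 + (t^2 - 2*t*v i)) + q (R^2 + (t^2 + 2*t*v i))) < 2 * n * q (R^2) := by
  have hn' : (0:ℝ) < n := by exact_mod_cast hn
  set c := 2 * n * q' (R^2) + 4 * R^2 * B with hc
  set C := (1 + 2 * R)^2 with hC
  have hC0 : 0 < C := by positivity
  set δ := -c / (8 * n * C) with hδ
  have hδ0 : 0 < δ := by apply div_pos; linarith; positivity
  have hδ1 : 2 * n * δ * C = -c / 4 := by rw [hδ]; field_simp; ring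
  obtain ⟨η, hη, H⟩ := aux_taylor q q' (R^2) B h1 h2 δ hδ0
  have hB : 0 < 4 * n * (|B| + 1) := by positivity
  refine ⟨min 1 (min (η / (1 + 2 * R)) (-c / (4 * n * (|B| + 1)))), ?_, ?_⟩
  · refine lt_min one_pos (lt_min (by positivity) (div_pos (by linarith) hB))
  intro t ht htt v hv
  obtain ⟨ht1, htt⟩ := lt_min_iff.1 htt
  obtain ⟨ht2, ht3⟩ := lt_min_iff.1 htt
  rw [lt_div_iff₀ (by positivity)] at ht2
  rw [lt_div_iff₀ hB] at ht3
  have hvi : ∀ i, |v i| ≤ R := fun i => by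
    rw [← hv]; exact PiLp.norm_apply_le v i
  have hsum : ∑ i, (v i)^2 = R^2 := by
    rw [← hv, EuclideanSpace.real_norm_sq_eq]
  have bound : ∀ h : ℝ, |h| ≤ t * (1 + 2 * R) →
      q (R^2 + h) ≤ q (R^2) + q' (R^2) * h + B / 2 * h ^ 2 + δ * (C * t ^ 2) := by
    intro h hh
    have := H h (by linarith)
    have h5 : h ^ 2 ≤ C * t ^ 2 := by
      rw [← sq_abs, hC]
      calc |h|^2 ≤ (t * (1 + 2 * R))^2 := by gcongr
        _ = _ := by ring
    have := mul_le_mul_of_nonneg_left h5 hδ0.le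
    linarith
  have each : ∀ i, q (R^2 + (t^2 - 2*t*v i)) + q (R^2 + (t^2 + 2*t*v i)) ≤
      2 * q (R^2) + 2 * q' (R^2) * t^2 + B * t^4 + 2 * δ * C * t^2 + 4 * B * t^2 * (v i)^2 := by
    intro i
    have ht2 : t^2 ≤ t := by nlinarith
    have := abs_le.1 (hvi i)
    have a1 := bound (t^2 - 2*t*v i) (by rw [abs_le]; constructor <;> nlinarith)
    have a2 := bound (t^2 + 2*t*v i) (by rw [abs_le]; constructor <;> nlinarith)
    nlinarith
  calc _ ≤ ∑ i, (2 * q (R^2) + 2 * q' (R^2) * t^2 + B * t^4 + 2 * δ * C * t^2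
        + 4 * B * t^2 * (v i)^2) := Finset.sum_le_sum fun i _ => each i
    _ = 2 * n * q (R^2) + t^2 * (c + n * B * t^2 + 2 * n * δ * C) := by
      rw [Finset.sum_add_distrib, ← Finset.mul_sum, hsum]
      simp [hc]; ring
    _ < 2 * n * q (R^2) := by
      have : n * B * t^2 ≤ -c/4 := by
        have e1 : n * B * t^2 ≤ n * |B| * t^2 := by gcongr; exact le_abs_self B
        have e2 : n * |B| * t^2 ≤ n * |B| * t := by gcongr; nlinarith
        nlinarith
      rw [hδ1]
      have : t^2 * (c + n * B * t^2 + -c/4) < 0 := by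
        apply mul_neg_of_pos_of_neg (by positivity); linarith
      linarith

lemma aux_finite (k : ℕ) (R : ℝ) (hR : 0 < R) :
    (μH[k] : Measure (EuclideanSpace ℝ (Fin (k+1)))) (Metric.sphere 0 R) < ⊤ := by
  refine (isCompact_sphere _ _).measure_lt_top_of_nhdsWithin fun x0 hx0 => ?_
  have hx0' : ‖x0‖ = R := by simpa using hx0
  have hx00 : x0 ≠ 0 := by rintro rfl; simp at hx0'; linarith
  set F := (ℝ ∙ x0)ᗮ
  have hF : Module.finrank ℝ F = k := by
    have : Fact (Module.finrank ℝ (EuclideanSpace ℝ (Fin (k+1))) = k + 1) := ⟨by simp⟩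
    exact Submodule.finrank_orthogonal_span_singleton hx00
  let ψ : F → EuclideanSpace ℝ (Fin (k+1)) := fun w => (R / ‖x0 + w‖) • (x0 + (w:EuclideanSpace ℝ (Fin (k+1))))
  have hψ : ContDiffAt ℝ 1 ψ 0 := by
    have h0 : ContDiffAt ℝ 1 (fun w : F => x0 + (w:EuclideanSpace ℝ (Fin (k+1)))) 0 :=
      contDiffAt_const.add F.subtypeL.contDiff.contDiffAt
    refine ContDiffAt.smul (contDiffAt_const.div (h0.norm ℝ ?_) ?_) h0
    · simpa using hx00
    · simpa using hx00
  obtain ⟨K, t, ht, hK⟩ := hψ.exists_lipschitzOnWith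
  obtain ⟨r, hr, hrt⟩ := Metric.nhds_basis_closedBall.mem_iff.1 ht
  have hK := hK.mono hrt
  refine ⟨ψ '' Metric.closedBall 0 r, ?_, ?_⟩
  · let π : EuclideanSpace ℝ (Fin (k+1)) → F := fun y =>
      F.orthogonalProjectionOnto ((R^2 / inner ℝ x0 y) • y)
    have hin : inner ℝ x0 x0 = R^2 := by rw [real_inner_self_eq_norm_sq, hx0']
    have hc : ContinuousAt π x0 := by
      refine F.orthogonalProjectionOnto.continuous.continuousAt.comp ?_
      have hi : ContinuousAt (fun y => inner ℝ x0 y) x0 := by fun_prop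
      refine ContinuousAt.smul (ContinuousAt.div continuousAt_const hi ?_) continuousAt_id
      rw [hin]; positivity
    have hmem : ∀ y, 0 < inner ℝ x0 y → ((π y : F) : EuclideanSpace ℝ (Fin (k+1))) = (R^2 / inner ℝ x0 y) • y - x0 := by
      intro y hy
      have hm : (R^2 / inner ℝ x0 y) • y - x0 ∈ F := by
        rw [Submodule.mem_orthogonal_singleton_iff_inner_right, inner_sub_right, inner_smul_right, hin]
        field_simp; ring
      have hx : F.orthogonalProjectionOnto x0 = 0 := by
        apply Submodule.orthogonalProjectionOnto_orthogonal_apply_eq_zero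
        exact Submodule.mem_span_singleton_self x0
      have := Submodule.orthogonalProjectionOnto_mem_subspace_eq_self (K := F) ⟨_, hm⟩
      simp only [map_sub, hx, sub_zero] at this
      exact congrArg Subtype.val this
    have h0 : π x0 = 0 := by
      apply Subtype.ext
      rw [hmem x0 (by rw [hin]; positivity), hin, div_self (by positivity)]
      simp
    have e1 : ∀ᶠ y in nhds x0, π y ∈ Metric.closedBall (0:F) r := by
      apply hc; rw [h0]; exact Metric.closedBall_mem_nhds _ hr
    have e2 : ∀ᶠ y in nhds x0, 0 < inner ℝ x0 y := by
      have : ContinuousAt (fun y => inner ℝ x0 y) x0 := by fun_prop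
      exact this.eventually (lt_mem_nhds (by simp only []; rw [hin]; positivity))
    filter_upwards [nhdsWithin_le_nhds e1, nhdsWithin_le_nhds e2, self_mem_nhdsWithin] with y hy1 hy2 hy3
    refine ⟨π y, hy1, ?_⟩
    have hy : ‖y‖ = R := by simpa using hy3
    simp only [ψ, hmem y hy2, add_sub_cancel]
    rw [norm_smul, hy, smul_smul, Real.norm_of_nonneg (by positivity)]
    have : R / (R ^ 2 / inner ℝ x0 y * R) * (R ^ 2 / inner ℝ x0 y) = 1 := by field_simp
    rw [this, one_smul]
  · refine (hK.hausdorffMeasure_image_le (by positivity)).trans_lt ?_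
    have : (μH[(k:ℝ)] : Measure F) = μH[Module.finrank ℝ F] := by rw [hF]
    rw [this]
    refine ENNReal.mul_lt_top ?_ (isCompact_closedBall _ _).measure_lt_top
    exact ENNReal.rpow_lt_top_of_nonneg (by positivity) (by simp)

lemma aux_pos (k : ℕ) (R : ℝ) (hR : 0 < R) :
    0 < (μH[k] : Measure (EuclideanSpace ℝ (Fin (k+1)))) (Metric.sphere 0 R) := by
  set x0 : EuclideanSpace ℝ (Fin (k+1)) := EuclideanSpace.single 0 1
  have hx0' : ‖x0‖ = 1 := by simp [x0]
  have hx00 : x0 ≠ 0 := by intro h; simp [h] at hx0'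
  set F := (ℝ ∙ x0)ᗮ
  have hF : Module.finrank ℝ F = k := by
    have : Fact (Module.finrank ℝ (EuclideanSpace ℝ (Fin (k+1))) = k + 1) := ⟨by simp⟩
    exact Submodule.finrank_orthogonal_span_singleton hx00
  have hL : LipschitzWith 1 (F.orthogonalProjectionOnto) := by
    refine F.orthogonalProjectionOnto.lipschitz.weaken ?_
    exact_mod_cast Submodule.orthogonalProjectionOnto_norm_le F
  have h1 := hL.hausdorffMeasure_image_le (d := k) (by positivity) (Metric.sphere 0 R)
  simp only [ENNReal.coe_one, ENNReal.one_rpow, one_mul] at h1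
  refine lt_of_lt_of_le ?_ h1
  have : (μH[(k:ℝ)] : Measure F) = μH[Module.finrank ℝ F] := by rw [hF]
  rw [this]
  refine (Metric.measure_ball_pos _ (0:F) hR).trans_le (measure_mono ?_)
  intro w hw
  have hw' : ‖(w : EuclideanSpace ℝ (Fin (k+1)))‖ < R := by simpa using hw
  have hin : inner ℝ x0 (w : EuclideanSpace ℝ (Fin (k+1))) = 0 :=
    Submodule.mem_orthogonal_singleton_iff_inner_right.1 w.2
  refine ⟨w + Real.sqrt (R^2 - ‖(w : EuclideanSpace ℝ (Fin (k+1)))‖^2) • x0, ?_, ?_⟩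
  · have hnn : 0 ≤ R^2 - ‖(w : EuclideanSpace ℝ (Fin (k+1)))‖^2 := by
      nlinarith [norm_nonneg (w : EuclideanSpace ℝ (Fin (k+1)))]
    rw [mem_sphere_zero_iff_norm, ← sq_eq_sq₀ (norm_nonneg _) hR.le, norm_add_sq_real,
      inner_smul_right, real_inner_comm, hin, norm_smul, hx0', Real.norm_of_nonneg (Real.sqrt_nonneg _),
      mul_one, Real.sq_sqrt hnn]
    ring
  · have hx : F.orthogonalProjectionOnto x0 = 0 := by
      apply Submodule.orthogonalProjectionOnto_orthogonal_apply_eq_zero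
      exact Submodule.mem_span_singleton_self x0
    simp [hx]

lemma aux_visc (k : ℕ) (g : ℝ → ℝ) (hg : ContinuousOn g (Set.Ioi 0))
    (hind : ∀ R : ℝ, 0 < R → ∀ x₁ x₂ : EuclideanSpace ℝ (Fin (k + 1)),
      ‖x₁‖ < R → ‖x₂‖ < R →
      ∫ v in Metric.sphere (0 : EuclideanSpace ℝ (Fin (k + 1))) R, g ‖x₁ - v‖ ∂μH[k]
        = ∫ v in Metric.sphere (0 : EuclideanSpace ℝ (Fin (k + 1))) R, g ‖x₂ - v‖ ∂μH[k])
    (q q' : ℝ → ℝ) (R B : ℝ) (hR : 0 < R)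
    (h1 : ∀ᶠ u in nhds (R^2), HasDerivAt q (q' u) u) (h2 : HasDerivAt q' B (R^2))
    (hL : 2 * ((k + 1 : ℕ) : ℝ) * q' (R^2) + 4 * R^2 * B < 0)
    (hmax : ∀ᶠ u in nhds (R^2), g (Real.sqrt u) - q u ≤ g R - q (R^2)) : False := by
  obtain ⟨t0, ht0, H⟩ := aux_point (n := k + 1) (Nat.succ_pos k) q q' R B hR h1 h2 hL
  obtain ⟨η, hη, H2⟩ := Metric.eventually_nhds_iff_ball.1 hmax
  obtain ⟨t, ht, htm⟩ : ∃ t : ℝ, 0 < t ∧ t < min (min t0 R) (min 1 (η / (1 + 2 * R))) :=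
    exists_between (by positivity)
  obtain ⟨hta, htb⟩ := lt_min_iff.1 htm
  obtain ⟨htt0, htR⟩ := lt_min_iff.1 hta
  obtain ⟨ht1, htη⟩ := lt_min_iff.1 htb
  rw [lt_div_iff₀ (by positivity)] at htη
  set S := Metric.sphere (0 : EuclideanSpace ℝ (Fin (k + 1))) R with hS
  have hfin : (μH[k] : Measure (EuclideanSpace ℝ (Fin (k+1)))) S < ⊤ := aux_finite k R hR
  have hpos : 0 < (μH[k] : Measure (EuclideanSpace ℝ (Fin (k+1)))) S := aux_pos k R hR
  have hint : ∀ x : EuclideanSpace ℝ (Fin (k + 1)), ‖x‖ < R →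
      IntegrableOn (fun v => g ‖x - v‖) S μH[k] := by
    intro x hx
    refine ContinuousOn.integrableOn_of_subset_isCompact (K := S) ?_ (isCompact_sphere _ _)
      Metric.isClosed_sphere.measurableSet subset_rfl hfin.ne
    refine hg.comp (by fun_prop) ?_
    intro v hv
    have hv' : ‖v‖ = R := by simpa [hS] using hv
    simp only [Set.mem_Ioi, norm_pos_iff, sub_ne_zero]
    rintro rfl
    linarith
  let e : Fin (k+1) → EuclideanSpace ℝ (Fin (k+1)) := fun i => EuclideanSpace.single i t
  have he : ∀ i, ‖e i‖ < R := fun i => by simp [e, abs_of_pos ht, htR]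
  have he' : ∀ i, ‖-e i‖ < R := fun i => by rw [norm_neg]; exact he i
  have hcoord : ∀ i (v : EuclideanSpace ℝ (Fin (k+1))), inner ℝ (e i) v = t * v i := by
    intro i v
    simp [e, EuclideanSpace.inner_single_left]
  have hne : ∀ i, ‖e i‖ = t := fun i => by simp [e, abs_of_pos ht]
  have hn1 : ∀ i, ∀ v ∈ S, ‖e i - v‖ = Real.sqrt (R^2 + (t^2 - 2*t*v i)) := by
    intro i v hv
    have hv' : ‖v‖ = R := by simpa [hS] using hv
    rw [← Real.sqrt_sq (norm_nonneg (e i - v)), norm_sub_sq_real, hcoord, hne, hv']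
    congr 1; ring
  have hn2 : ∀ i, ∀ v ∈ S, ‖-e i - v‖ = Real.sqrt (R^2 + (t^2 + 2*t*v i)) := by
    intro i v hv
    have hv' : ‖v‖ = R := by simpa [hS] using hv
    rw [← Real.sqrt_sq (norm_nonneg (-e i - v)), norm_sub_sq_real, inner_neg_left, hcoord, norm_neg,
      hne, hv']
    congr 1; ring
  have hlt : ∀ v ∈ S, 0 < 2 * ((k+1 : ℕ) : ℝ) * g ‖(0 : EuclideanSpace ℝ (Fin (k+1))) - v‖ -
      ∑ i, (g ‖e i - v‖ + g ‖-e i - v‖) := by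
    intro v hv
    have hv' : ‖v‖ = R := by simpa [hS] using hv
    have h3 := H t ht htt0 v hv'
    have hh : ∀ h : ℝ, |h| ≤ t * (1 + 2 * R) →
        g (Real.sqrt (R^2 + h)) ≤ q (R^2+h) + (g R - q (R^2)) := by
      intro h hh
      have := H2 (R^2 + h) (by
        rw [Metric.mem_ball, Real.dist_eq, add_sub_cancel_left]; linarith)
      linarith
    have h4 : ∑ i, (g ‖e i - v‖ + g ‖-e i - v‖) ≤
        ∑ i, ((q (R^2 + (t^2 - 2*t*v i)) + q (R^2 + (t^2 + 2*t*v i))) + 2 * (g R - q (R^2))) := by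
      refine Finset.sum_le_sum fun i _ => ?_
      rw [hn1 i v hv, hn2 i v hv]
      have ht2 : t^2 ≤ t := by nlinarith
      have hvi : |v i| ≤ R := by rw [← hv']; exact PiLp.norm_apply_le v i
      have := abs_le.1 hvi
      have a1 := hh (t^2 - 2*t*v i) (by rw [abs_le]; constructor <;> nlinarith)
      have a2 := hh (t^2 + 2*t*v i) (by rw [abs_le]; constructor <;> nlinarith)
      linarith
    have h5 : ∑ i, ((q (R^2 + (t^2 - 2*t*v i)) + q (R^2 + (t^2 + 2*t*v i)))
        + 2 * (g R - q (R^2))) = ∑ i, (q (R^2 + (t^2 - 2*t*v i)) + q (R^2 + (t^2 + 2*t*v i)))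
          + ((k+1 : ℕ) : ℝ) * (2 * (g R - q (R^2))) := by
      rw [Finset.sum_add_distrib (f := fun i => q (R^2 + (t^2 - 2*t*v i)) + q (R^2 + (t^2 + 2*t*v i))),
        Finset.sum_const, Finset.card_univ, Fintype.card_fin, nsmul_eq_mul]
    rw [h5] at h4
    rw [zero_sub, norm_neg, hv']
    linarith
  have hsint : ∀ i, IntegrableOn (fun v => g ‖e i - v‖ + g ‖-e i - v‖) S μH[k] := fun i =>
    (hint _ (he i)).add (hint _ (he' i))
  have hS1 : IntegrableOn (fun v => ∑ i, (g ‖e i - v‖ + g ‖-e i - v‖)) S μH[k] :=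
    integrable_finsetSum _ fun i _ => hsint i
  have h00 : ‖(0 : EuclideanSpace ℝ (Fin (k+1)))‖ < R := by simpa using hR
  have hS0 : IntegrableOn (fun v => 2 * ((k+1 : ℕ) : ℝ) * g ‖(0 : EuclideanSpace ℝ (Fin (k+1))) - v‖) S μH[k] :=
    (hint 0 h00).const_mul _
  have hzero : ∫ v in S, (2 * ((k+1 : ℕ) : ℝ) * g ‖(0 : EuclideanSpace ℝ (Fin (k+1))) - v‖ -
      ∑ i, (g ‖e i - v‖ + g ‖-e i - v‖)) ∂μH[k] = 0 := by
    rw [integral_sub hS0 hS1, integral_const_mul, integral_finsetSum _ fun i _ => hsint i]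
    have : ∀ i, ∫ v in S, (g ‖e i - v‖ + g ‖-e i - v‖) ∂μH[k] =
        2 * ∫ v in S, g ‖(0 : EuclideanSpace ℝ (Fin (k+1))) - v‖ ∂μH[k] := by
      intro i
      rw [integral_add (hint _ (he i)) (hint _ (he' i)), hind R hR _ 0 (he i) h00,
        hind R hR _ 0 (he' i) h00, two_mul]
    simp only [this, Finset.sum_const, Finset.card_univ, Fintype.card_fin, nsmul_eq_mul]
    ring
  have hpp : 0 < ∫ v in S, (2 * ((k+1 : ℕ) : ℝ) * g ‖(0 : EuclideanSpace ℝ (Fin (k+1))) - v‖ -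
      ∑ i, (g ‖e i - v‖ + g ‖-e i - v‖)) ∂μH[k] := by
    refine (setIntegral_pos_iff_support_of_nonneg_ae ?_ (hS0.sub hS1)).2 ?_
    rotate_left
    · refine hpos.trans_le (measure_mono fun v hv => ⟨(hlt v hv).ne', hv⟩)
    · filter_upwards [self_mem_ae_restrict Metric.isClosed_sphere.measurableSet] with v hv
      exact (hlt v hv).le
  linarith

lemma aux_comp (k : ℕ) (g : ℝ → ℝ) (hg : ContinuousOn g (Set.Ioi 0))
    (hind : ∀ R : ℝ, 0 < R → ∀ x₁ x₂ : EuclideanSpace ℝ (Fin (k + 1)),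
      ‖x₁‖ < R → ‖x₂‖ < R →
      ∫ v in Metric.sphere (0 : EuclideanSpace ℝ (Fin (k + 1))) R, g ‖x₁ - v‖ ∂μH[k]
        = ∫ v in Metric.sphere (0 : EuclideanSpace ℝ (Fin (k + 1))) R, g ‖x₂ - v‖ ∂μH[k])
    (φ : ℝ → ℝ) (hφ : ∀ s : ℝ, 0 < s → HasDerivAt φ (s ^ (-((k:ℝ)+1)/2)) s)
    (a b p r : ℝ) (hp : 0 < p) (hpr : p < r)
    (hlp : g (Real.sqrt p) ≤ a + b * φ p) (hlr : g (Real.sqrt r) ≤ a + b * φ r) :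
    ∀ s ∈ Set.Icc p r, g (Real.sqrt s) ≤ a + b * φ s := by
  have main : ∀ ε > 0, ∀ s ∈ Set.Icc p r,
      g (Real.sqrt s) - (a + b * φ s - ε * s) ≤ ε * r := by
    intro ε hε
    have hc : ContinuousOn (fun s => g (Real.sqrt s) - (a + b * φ s - ε * s)) (Set.Icc p r) := by
      have hφc : ContinuousOn φ (Set.Icc p r) := fun s hs =>
        (hφ s (hp.trans_le hs.1)).continuousAt.continuousWithinAt
      refine ContinuousOn.sub (hg.comp (by fun_prop) ?_) (by fun_prop)
      intro s hs
      exact Real.sqrt_pos.2 (hp.trans_le hs.1)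
    obtain ⟨s1, hs1, hmax⟩ := isCompact_Icc.exists_isMaxOn (Set.nonempty_Icc.2 hpr.le) hc
    have hs10 : 0 < s1 := hp.trans_le hs1.1
    rcases hs1.1.eq_or_lt with h | hlt1
    · intro s hs
      have : g (Real.sqrt s) - (a + b * φ s - ε * s) ≤ g (Real.sqrt s1) - (a + b * φ s1 - ε * s1) :=
        hmax hs
      subst h
      nlinarith
    rcases hs1.2.eq_or_lt with h | hlt2
    · intro s hs
      have : g (Real.sqrt s) - (a + b * φ s - ε * s) ≤ g (Real.sqrt s1) - (a + b * φ s1 - ε * s1) :=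
        hmax hs
      subst h
      nlinarith
    exfalso
    have hsq : (Real.sqrt s1)^2 = s1 := Real.sq_sqrt hs10.le
    refine aux_visc k g hg hind (fun s => a + b * φ s - ε * s)
      (fun s => b * s ^ (-((k:ℝ)+1)/2) - ε) (Real.sqrt s1)
      (b * ((-((k:ℝ)+1)/2) * s1 ^ (-((k:ℝ)+1)/2 - 1))) (Real.sqrt_pos.2 hs10) ?_ ?_ ?_ ?_
    · rw [hsq]
      filter_upwards [lt_mem_nhds hs10] with u hu
      refine HasDerivAt.congr_deriv ((((hφ u hu).const_mul b).const_add a).sub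
        ((hasDerivAt_id u).const_mul ε)) ?_
      ring
    · rw [hsq]
      exact ((Real.hasDerivAt_rpow_const (Or.inl hs10.ne')).const_mul b).sub_const ε
    · rw [hsq]
      have : s1 ^ (-((k:ℝ)+1)/2 - 1) * s1 = s1 ^ (-((k:ℝ)+1)/2) := by
        rw [Real.rpow_sub_one hs10.ne']; field_simp
      have e : 2 * ((k + 1 : ℕ) : ℝ) * (b * s1 ^ (-((k:ℝ)+1)/2) - ε) +
          4 * s1 * (b * ((-((k:ℝ)+1)/2) * s1 ^ (-((k:ℝ)+1)/2 - 1))) = - (2 * (k+1) * ε) := by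
        rw [← this]; push_cast; ring
      rw [e]
      have : 0 < 2 * ((k:ℝ)+1) * ε := by positivity
      linarith
    · rw [hsq]
      filter_upwards [Icc_mem_nhds hlt1 hlt2] with u hu
      exact hmax hu
  intro s hs
  refine le_of_forall_pos_le_add fun δ hδ => ?_
  have h0 : 0 < r - p := by linarith
  have := main (δ / (r - p)) (by positivity) s hs
  have h2 : δ / (r - p) * (r - s) ≤ δ := by
    calc δ / (r - p) * (r - s) ≤ δ / (r - p) * (r - p) := by gcongr; exact hs.1
      _ = δ := by field_simp
  linarith

lemma aux_lap {n : ℕ} (w w' : ℝ → ℝ) (B : ℝ) (x : EuclideanSpace ℝ (Fin n))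
    (h1 : ∀ᶠ u in nhds (‖x‖^2), HasDerivAt w (w' u) u) (h2 : HasDerivAt w' B (‖x‖^2)) :
    euclideanLaplacian (fun y => w (‖y‖^2)) x = 2 * n * w' (‖x‖^2) + 4 * ‖x‖^2 * B := by
  have hd : ∀ y : EuclideanSpace ℝ (Fin n), HasFDerivAt (fun y : EuclideanSpace ℝ (Fin n) => ‖y‖^2)
      (2 • innerSL ℝ y) y := fun y => (hasStrictFDerivAt_norm_sq y).hasFDerivAt
  have hev : fderiv ℝ (fun y : EuclideanSpace ℝ (Fin n) => w (‖y‖^2)) =ᶠ[nhds x]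
      fun y => (w' (‖y‖^2)) • (2 • innerSL ℝ y) := by
    have hc : ContinuousAt (fun y : EuclideanSpace ℝ (Fin n) => ‖y‖^2) x := by fun_prop
    filter_upwards [hc.eventually h1] with y hy
    exact (hy.comp_hasFDerivAt y (hd y)).fderiv
  have hd2 : HasFDerivAt (fun y : EuclideanSpace ℝ (Fin n) => (w' (‖y‖^2)) • (2 • innerSL ℝ y))
      _ x := (h2.comp_hasFDerivAt x (hd x)).smul (((innerSL ℝ).hasFDerivAt (x := x)).const_smul (2:ℕ))
  unfold euclideanLaplacian
  have each : ∀ i : Fin n, iteratedFDeriv ℝ 2 (fun y : EuclideanSpace ℝ (Fin n) => w (‖y‖^2)) x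
    ![EuclideanSpace.single i (1 : ℝ), EuclideanSpace.single i (1 : ℝ)] =
      2 * w' (‖x‖^2) + 4 * B * (x i)^2 := by
    intro i
    rw [iteratedFDeriv_two_apply, hev.fderiv_eq, hd2.fderiv]
    have h11 : innerSL ℝ (EuclideanSpace.single i (1:ℝ)) (EuclideanSpace.single i (1:ℝ)) = 1 := by
      rw [innerSL_apply_apply]; simp
    simp [EuclideanSpace.inner_single_right, innerSL_apply_apply, -coe_innerSL_apply]
    first
      | ring1
      | linear_combination (2 * w' (‖x‖^2)) * h11
      | (erw [h11]; ring1)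
      | (erw [innerSL_apply_apply]; simp; ring1)
  simp only [each]
  rw [Finset.sum_add_distrib, ← Finset.mul_sum _ (fun i => (x i)^2),
    ← EuclideanSpace.real_norm_sq_eq, Finset.sum_const,
    Finset.card_univ, Fintype.card_fin, nsmul_eq_mul]
  ring

/-- If for every `R > 0` the spherical integral `∫_{S^k(R)} g(‖x − v‖)` does not depend on
the point `x` inside the sphere, then `x ↦ g(‖x‖)` is harmonic away from the origin. -/
theorem harmonic_of_spherical_mean_independent
    (k : ℕ) (hk : 1 ≤ k) (g : ℝ → ℝ) (hg : ContinuousOn g (Set.Ioi 0))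
    (hind : ∀ R : ℝ, 0 < R → ∀ x₁ x₂ : EuclideanSpace ℝ (Fin (k + 1)),
      ‖x₁‖ < R → ‖x₂‖ < R →
      ∫ v in Metric.sphere (0 : EuclideanSpace ℝ (Fin (k + 1))) R, g ‖x₁ - v‖ ∂μH[k]
        = ∫ v in Metric.sphere (0 : EuclideanSpace ℝ (Fin (k + 1))) R, g ‖x₂ - v‖ ∂μH[k]) :
    ContDiffOn ℝ 2 (fun x : EuclideanSpace ℝ (Fin (k + 1)) => g ‖x‖)
        ({0}ᶜ : Set (EuclideanSpace ℝ (Fin (k + 1))))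
      ∧ ∀ x : EuclideanSpace ℝ (Fin (k + 1)), x ≠ 0 →
          euclideanLaplacian (fun x => g ‖x‖) x = 0 := by
  obtain ⟨φ, hφc, hφ⟩ := aux_phi k hk
  have local_eq : ∀ x : EuclideanSpace ℝ (Fin (k + 1)), x ≠ 0 → ∃ a b : ℝ,
      (fun y : EuclideanSpace ℝ (Fin (k + 1)) => g ‖y‖) =ᶠ[nhds x]
        fun y => a + b * φ (‖y‖^2) := by
    intro x hx
    set s := ‖x‖^2 with hs
    have hs0 : 0 < s := by have := norm_pos_iff.2 hx; positivity
    have hlt : s / 2 < 2 * s := by linarith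
    have hp : 0 < s / 2 := by linarith
    have hne : φ (2 * s) - φ (s / 2) ≠ 0 := by
      have hm : StrictMonoOn φ (Set.Ioi 0) := by
        refine strictMonoOn_of_deriv_pos (convex_Ioi 0) hφc.continuousOn ?_
        intro u hu
        rw [interior_Ioi] at hu
        rw [(hφ u hu).deriv]
        exact Real.rpow_pos_of_pos hu _
      have := hm hp (hp.trans hlt) hlt
      linarith
    obtain ⟨b, hb⟩ : ∃ b, b = (g (Real.sqrt (2 * s)) - g (Real.sqrt (s/2))) / (φ (2 * s) - φ (s / 2)) :=
      ⟨_, rfl⟩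
    have hb' : b * (φ (2 * s) - φ (s / 2)) = g (Real.sqrt (2 * s)) - g (Real.sqrt (s/2)) := by
      rw [hb]; field_simp
    obtain ⟨a, ha⟩ : ∃ a, a = g (Real.sqrt (s/2)) - b * φ (s/2) := ⟨_, rfl⟩
    refine ⟨a, b, ?_⟩
    have u1 := aux_comp k g hg hind φ hφ a b (s/2) (2*s) hp hlt (by linarith) (by linarith)
    have u2 := aux_comp k (fun r => - g r) hg.neg (by
      intro R hR x₁ x₂ h₁ h₂
      rw [integral_neg, integral_neg, hind R hR x₁ x₂ h₁ h₂]) φ hφ (-a) (-b) (s/2) (2*s) hp hlt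
      (by linarith) (by linarith)
    have hc : ContinuousAt (fun y : EuclideanSpace ℝ (Fin (k+1)) => ‖y‖^2) x := by fun_prop
    filter_upwards [hc.eventually (Icc_mem_nhds (a := s/2) (b := 2*s) (by linarith) (by linarith))]
      with y hy
    have e1 := u1 _ hy
    have e2 := u2 _ hy
    rw [Real.sqrt_sq (norm_nonneg y)] at e1 e2
    linarith
  constructor
  · intro x hx
    obtain ⟨a, b, h⟩ := local_eq x hx
    have hx0 : 0 < ‖x‖^2 := by have := norm_pos_iff.2 hx; positivity
    refine ContDiffAt.contDiffWithinAt (ContDiffAt.congr_of_eventuallyEq ?_ h)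
    have hφx : ContDiffAt ℝ 2 φ (‖x‖^2) := hφc.contDiffAt (Ioi_mem_nhds hx0)
    exact contDiffAt_const.add (contDiffAt_const.mul (hφx.comp x (contDiff_norm_sq ℝ).contDiffAt))
  · intro x hx
    obtain ⟨a, b, h⟩ := local_eq x hx
    have hx0 : 0 < ‖x‖^2 := by have := norm_pos_iff.2 hx; positivity
    have hcong : euclideanLaplacian (fun x : EuclideanSpace ℝ (Fin (k + 1)) => g ‖x‖) x =
        euclideanLaplacian (fun y => (fun s => a + b * φ s) (‖y‖^2)) x := by
      unfold euclideanLaplacian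
      rw [Filter.EventuallyEq.eq_of_nhds (Filter.EventuallyEq.iteratedFDeriv ℝ h 2)]
    rw [hcong, aux_lap (fun s => a + b * φ s) (fun s => b * s ^ (-((k:ℝ)+1)/2))
      (b * ((-((k:ℝ)+1)/2) * (‖x‖^2) ^ (-((k:ℝ)+1)/2 - 1))) x]
    · have : (‖x‖^2) ^ (-((k:ℝ)+1)/2 - 1) * ‖x‖^2 = (‖x‖^2) ^ (-((k:ℝ)+1)/2) := by
        rw [Real.rpow_sub_one hx0.ne']; field_simp
      rw [← this]; push_cast; ring
    · filter_upwards [lt_mem_nhds hx0] with u hu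
      exact ((hφ u hu).const_mul b).const_add a
    · exact (Real.hasDerivAt_rpow_const (Or.inl hx0.ne')).const_mul b
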